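/- For every finite set P of n points in the Euclidean plane ℝ² there exists a noncrossing covering cycle for P with at most ⌈21n/22⌉ + 1 edges. -/

import Mathlib

/-!
After a generic shear the points have distinct abscissae; let `p 0, p 1, …` be the points sorted
from left to right.  The monotone path through them uses one edge per pair of consecutive points.
The proof saves one edge in every block of eleven consecutive points (`exists_saving`), so that
`n` points are covered by a path with `n - 1 - ⌊n / 11⌋` edges (`sorted_strip`), and closes that
path by two edges through an apex high above (`Strip.close`).  This gives a cycle with at most
`n + 1 - ⌊n / 11⌋ ≤ ⌈21 n / 22⌉ + 1` edges.  All partial paths live in vertical strips with their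
end points on the boundary lines (`Strip`), so concatenation never creates crossings
(`Strip.glue`).

The saving device is `hook`: if `a, b, c, d`, from left to right, form a cap or a cup, the lines
`ab` and `cd` meet at a point `q` horizontally between `b` and `c`, and the two edges `aq`, `qd`
cover all four points.  Suppose that no block among eleven consecutive points allows a saving
(`NoSave`).  Then successively stronger restrictions hold.

* Consecutive turns alternate, that is, the points form a zigzag with, say, the odd points above
  (`NoSave.zig`, by `save_hook`).
* Four consecutive points, not too close to the ends, are in convex position (`NoSave.tall`, by
  `save_six_left` and `save_six_right`).
* Three consecutive upper points form a cup and three consecutive lower points form a cap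
  (`NoSave.outer`, by `save_seven`).

Hence the upper points `p 1, p 3, p 5, p 7` form a cup, which two edges cover, and the lower points
`p 2, p 4, p 6, p 8` form a cap.  The path that runs through the upper points to `p 7`, returns
along `p 6, p 4, p 2`, and leaves by the edge from `p 2` to `p 8` below the cap has six edges, one
fewer than the monotone path through these eight points (`save_eight`), a contradiction.
-/

/-- The `i`-th edge of the closed polygonal cycle with vertex sequence `v`:
the closed segment from `v i` to `v (i+1)`, indices modulo `m + 1`. -/
def cycleEdge {m : ℕ} (v : Fin (m + 1) → ℝ × ℝ) (i : Fin (m + 1)) : Set (ℝ × ℝ) :=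
  segment ℝ (v i) (v (i + 1))

/-- A polygonal cycle is noncrossing if its edges pairwise intersect only in shared
cycle vertices: two consecutive edges meet exactly at their common endpoint, and two
nonconsecutive edges are disjoint. -/
def IsNoncrossingCycle {m : ℕ} (v : Fin (m + 1) → ℝ × ℝ) : Prop :=
  (∀ i : Fin (m + 1), cycleEdge v i ∩ cycleEdge v (i + 1) = {v (i + 1)}) ∧
  (∀ i j : Fin (m + 1), i ≠ j → j ≠ i + 1 → i ≠ j + 1 →
      cycleEdge v i ∩ cycleEdge v j = ∅)

/-- Twice the signed area of the triangle `p q r`.  For `p.1 < q.1` it is positive exactly when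
`r` lies above the line `pq`, and negative exactly when `r` lies below it. -/
def D (p q r : ℝ × ℝ) : ℝ := (q.1 - p.1) * (r.2 - p.2) - (r.1 - p.1) * (q.2 - p.2)

/-! ### Segments and the orientation predicate -/

lemma seg_param {a b P : ℝ × ℝ} (h : P ∈ segment ℝ a b) :
    ∃ t : ℝ, 0 ≤ t ∧ t ≤ 1 ∧ P.1 = a.1 + t * (b.1 - a.1) ∧ P.2 = a.2 + t * (b.2 - a.2) := by
  obtain ⟨s, t, hs, ht, hst, rfl⟩ := h
  obtain rfl : s = 1 - t := by linarith
  refine ⟨t, ht, by linarith, ?_, ?_⟩ <;> simp <;> ring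

lemma D_seg {a b P : ℝ × ℝ} (p r : ℝ × ℝ) (h : P ∈ segment ℝ a b) :
    ∃ t : ℝ, 0 ≤ t ∧ t ≤ 1 ∧ P.1 = a.1 + t * (b.1 - a.1) ∧ P.2 = a.2 + t * (b.2 - a.2) ∧
      D p r P = (1 - t) * D p r a + t * D p r b := by
  obtain ⟨t, h0, h1, hx, hy⟩ := seg_param h
  refine ⟨t, h0, h1, hx, hy, ?_⟩
  simp only [D, hx, hy]; ring

lemma D_seg_nonneg {a b P p r : ℝ × ℝ} (h : P ∈ segment ℝ a b) (ha : 0 ≤ D p r a)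
    (hb : 0 ≤ D p r b) : 0 ≤ D p r P := by
  obtain ⟨t, h0, h1, -, -, hD⟩ := D_seg p r h
  rw [hD]; have : 0 ≤ 1 - t := by linarith
  positivity

lemma D_seg_nonpos {a b P p r : ℝ × ℝ} (h : P ∈ segment ℝ a b) (ha : D p r a ≤ 0)
    (hb : D p r b ≤ 0) : D p r P ≤ 0 := by
  obtain ⟨t, h0, h1, -, -, hD⟩ := D_seg p r h
  rw [hD]; nlinarith

lemma seg_x_le {a b P : ℝ × ℝ} {x : ℝ} (h : P ∈ segment ℝ a b) (ha : a.1 ≤ x) (hb : b.1 ≤ x) :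
    P.1 ≤ x := by
  obtain ⟨t, h0, h1, hx, -⟩ := seg_param h
  rw [hx]; nlinarith

lemma le_seg_x {a b P : ℝ × ℝ} {x : ℝ} (h : P ∈ segment ℝ a b) (ha : x ≤ a.1) (hb : x ≤ b.1) :
    x ≤ P.1 := by
  obtain ⟨t, h0, h1, hx, -⟩ := seg_param h
  rw [hx]; nlinarith

@[simp] lemma D_left (p q : ℝ × ℝ) : D p q p = 0 := by simp [D]
@[simp] lemma D_right (p q : ℝ × ℝ) : D p q q = 0 := by simp only [D]; ring

lemma D_rot (p q r : ℝ × ℝ) : D q r p = D p q r := by simp only [D]; ring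
lemma D_swap (p q r : ℝ × ℝ) : D p r q = - D p q r := by simp only [D]; ring

lemma mem_seg_of_D {a b q : ℝ × ℝ} (h1 : a.1 ≤ b.1) (h2 : b.1 ≤ q.1) (h : a.1 < q.1)
    (hD : D a q b = 0) : b ∈ segment ℝ a q := by
  have hq : 0 < q.1 - a.1 := by linarith
  refine ⟨(q.1 - b.1) / (q.1 - a.1), (b.1 - a.1) / (q.1 - a.1), by
    apply div_nonneg <;> linarith, by apply div_nonneg <;> linarith, by field_simp; ring, ?_⟩
  ext
  · simp; field_simp; ring
  · simp only [D] at hD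
    simp; field_simp; linear_combination -hD

/-- If `u` and `v` lie on the line `pr` and `w` does not, the consecutive edges `uv` and `vw` meet
only in `v`. -/
lemma adj_eq {p r u v w P : ℝ × ℝ} (hu : D p r u = 0) (hv : D p r v = 0) (hw : D p r w ≠ 0)
    (h1 : P ∈ segment ℝ u v) (h2 : P ∈ segment ℝ v w) : P = v := by
  obtain ⟨s, -, -, -, -, hD⟩ := D_seg p r h1
  obtain ⟨t, -, -, hx, hy, hD'⟩ := D_seg p r h2
  rw [hu, hv] at hD
  rw [hD, hv] at hD'
  have ht : t = 0 := by
    have : t * D p r w = 0 := by linarith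
    exact (mul_eq_zero.1 this).resolve_right hw
  subst ht
  ext
  · simpa using hx
  · simpa using hy

lemma adj_sorted {u v w P : ℝ × ℝ} (huv : u.1 < v.1) (hvw : v.1 ≤ w.1)
    (h1 : P ∈ segment ℝ u v) (h2 : P ∈ segment ℝ v w) : P = v := by
  have hP : v.1 ≤ P.1 := le_seg_x h2 le_rfl hvw
  obtain ⟨t, h0, ht1, hx, hy⟩ := seg_param h1
  have ht : t = 1 := by
    have : v.1 - u.1 ≤ t * (v.1 - u.1) := by linarith
    have := le_of_mul_le_mul_right (by linarith : 1 * (v.1 - u.1) ≤ t * (v.1 - u.1)) (by linarith)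
    linarith
  subst ht
  ext
  · rw [hx]; ring
  · rw [hy]; ring

/-- No point `P` lies weakly below the line `uv` and weakly above the line `wz` if `P` is
horizontally between two points `s`, `t` at which `wz` runs strictly above `uv`; the latter is
witnessed by `s` and `t` lying between the two lines. -/
lemma sep {u v w z s t P : ℝ × ℝ} (huv : u.1 < v.1) (hwz : w.1 < z.1)
    (hs : s.1 ≤ P.1) (ht : P.1 ≤ t.1)
    (hs1 : 0 ≤ D u v s) (hs2 : D w z s ≤ 0) (hs3 : 0 < D u v s ∨ D w z s < 0)
    (ht1 : 0 ≤ D u v t) (ht2 : D w z t ≤ 0) (ht3 : 0 < D u v t ∨ D w z t < 0)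
    (hP1 : D u v P ≤ 0) (hP2 : 0 ≤ D w z P) : False := by
  have ha : 0 < v.1 - u.1 := by linarith
  have hb : 0 < z.1 - w.1 := by linarith
  -- `G Q` is a positive multiple of the height of `wz` over `uv` at the abscissa of `Q`
  have G : ∀ Q : ℝ × ℝ, (z.1 - w.1) * D u v Q - (v.1 - u.1) * D w z Q =
      ((z.1 - w.1) * (v.1 - u.1) * (w.2 - u.2) - (z.1 - w.1) * (v.2 - u.2) * (0 - u.1)
        + (v.1 - u.1) * (z.2 - w.2) * (0 - w.1)) +
      Q.1 * ((v.1 - u.1) * (z.2 - w.2) - (z.1 - w.1) * (v.2 - u.2)) := by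
    intro Q; simp only [D]; ring
  have gs : 0 < (z.1 - w.1) * D u v s - (v.1 - u.1) * D w z s := by
    rcases hs3 with h | h
    · have := mul_pos hb h; have := mul_nonneg ha.le (neg_nonneg.2 hs2); linarith
    · have := mul_nonneg hb.le hs1; have := mul_pos ha (neg_pos.2 h); linarith
  have gt : 0 < (z.1 - w.1) * D u v t - (v.1 - u.1) * D w z t := by
    rcases ht3 with h | h
    · have := mul_pos hb h; have := mul_nonneg ha.le (neg_nonneg.2 ht2); linarith
    · have := mul_nonneg hb.le ht1; have := mul_pos ha (neg_pos.2 h); linarith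
  have gP : (z.1 - w.1) * D u v P - (v.1 - u.1) * D w z P ≤ 0 := by
    have := mul_nonneg hb.le (neg_nonneg.2 hP1); have := mul_nonneg ha.le hP2; linarith
  rw [G] at gs gt gP
  generalize (v.1 - u.1) * (z.2 - w.2) - (z.1 - w.1) * (v.2 - u.2) = k at gs gt gP
  rcases le_total 0 k with hk | hk
  · have := mul_le_mul_of_nonneg_right hs hk; linarith
  · have := mul_le_mul_of_nonpos_right ht hk; linarith

/-- The vertex saving device: if `a, b, c, d` form a cap or a cup (possibly degenerate), then the
lines `ab` and `cd` meet at a point `q` above or below the edge `bc`, and the two edges `aq`, `qd`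
cover all four points. -/
lemma hook {a b c d : ℝ × ℝ} (hab : a.1 < b.1) (hbc : b.1 < c.1) (hcd : c.1 < d.1)
    (h : (D a b c ≤ 0 ∧ D b c d ≤ 0) ∨ (0 ≤ D a b c ∧ 0 ≤ D b c d)) :
    ∃ q : ℝ × ℝ, b.1 ≤ q.1 ∧ q.1 ≤ c.1 ∧ b ∈ segment ℝ a q ∧ c ∈ segment ℝ q d ∧
      D a b q = 0 ∧ D c d q = 0 := by
  obtain ⟨m1, hm1⟩ : ∃ m, b.2 = a.2 + m * (b.1 - a.1) :=
    ⟨(b.2 - a.2) / (b.1 - a.1), by have : b.1 - a.1 ≠ 0 := by linarith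
                                   field_simp; ring⟩
  obtain ⟨m2, hm2⟩ : ∃ m, c.2 = b.2 + m * (c.1 - b.1) :=
    ⟨(c.2 - b.2) / (c.1 - b.1), by have : c.1 - b.1 ≠ 0 := by linarith
                                   field_simp; ring⟩
  obtain ⟨m3, hm3⟩ : ∃ m, d.2 = c.2 + m * (d.1 - c.1) :=
    ⟨(d.2 - c.2) / (d.1 - c.1), by have : d.1 - c.1 ≠ 0 := by linarith
                                   field_simp; ring⟩
  have e1 : D a b c = (b.1 - a.1) * (c.1 - b.1) * (m2 - m1) := by
    simp only [D, hm2, hm1]; ring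
  have e2 : D b c d = (c.1 - b.1) * (d.1 - c.1) * (m3 - m2) := by
    simp only [D, hm3, hm2]; ring
  have p1 : 0 < (b.1 - a.1) * (c.1 - b.1) := mul_pos (by linarith) (by linarith)
  have p2 : 0 < (c.1 - b.1) * (d.1 - c.1) := mul_pos (by linarith) (by linarith)
  have hm : (m2 ≤ m1 ∧ m3 ≤ m2) ∨ (m1 ≤ m2 ∧ m2 ≤ m3) := by
    rw [e1, e2] at h
    rcases h with ⟨h1, h2⟩ | ⟨h1, h2⟩
    · left; constructor
      · have := nonpos_of_mul_nonpos_right h1 p1; linarith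
      · have := nonpos_of_mul_nonpos_right h2 p2; linarith
    · right; constructor
      · have := nonneg_of_mul_nonneg_right h1 p1; linarith
      · have := nonneg_of_mul_nonneg_right h2 p2; linarith
  -- the abscissa of `q` divides `[b.1, c.1]` in the ratio `r`
  obtain ⟨r, hr0, hr1, hr⟩ : ∃ r : ℝ, 0 ≤ r ∧ r ≤ 1 ∧ (m1 - m3) * r = m2 - m3 := by
    by_cases h13 : m1 = m3
    · refine ⟨0, le_rfl, zero_le_one, ?_⟩
      rcases hm with ⟨x, y⟩ | ⟨x, y⟩ <;> linarith
    · have hne : m1 - m3 ≠ 0 := sub_ne_zero.2 h13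
      refine ⟨(m2 - m3) / (m1 - m3), ?_, ?_, by field_simp⟩
      · rcases hm with ⟨x, y⟩ | ⟨x, y⟩
        · apply div_nonneg <;> linarith
        · apply div_nonneg_of_nonpos <;> linarith
      · rcases hm with ⟨x, y⟩ | ⟨x, y⟩
        · have : 0 < m1 - m3 := lt_of_le_of_ne (by linarith) (Ne.symm hne)
          rw [div_le_one this]; linarith
        · have : m1 - m3 < 0 := lt_of_le_of_ne (by linarith) hne
          rw [div_le_one_of_neg this]; linarith
  have hq1 : 0 ≤ r * (c.1 - b.1) := mul_nonneg hr0 (by linarith)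
  have hq2 : r * (c.1 - b.1) ≤ 1 * (c.1 - b.1) := mul_le_mul_of_nonneg_right hr1 (by linarith)
  have hDa : D a b (b.1 + r * (c.1 - b.1), b.2 + m1 * (r * (c.1 - b.1))) = 0 := by
    simp only [D, hm1]; ring
  have hDc : D c d (b.1 + r * (c.1 - b.1), b.2 + m1 * (r * (c.1 - b.1))) = 0 := by
    simp only [D, hm3, hm2]; linear_combination (d.1 - c.1) * (c.1 - b.1) * hr
  refine ⟨(b.1 + r * (c.1 - b.1), b.2 + m1 * (r * (c.1 - b.1))), by simpa using hq1,
    by simp only; linarith, ?_, ?_, hDa, hDc⟩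
  · apply mem_seg_of_D hab.le (by simp only; linarith) (by simp only; linarith)
    rw [D_swap, hDa, neg_zero]
  · apply mem_seg_of_D (by simp only; linarith) hcd.le (by simp only; linarith)
    rw [D_rot, D_swap, hDc, neg_zero]

/-! ### Noncrossing polygonal paths confined to a vertical strip -/

/-- `NP a z k T`: there is a noncrossing polygonal path from `a` to `z` with `k` edges, whose
union is `T`.  The constructor `cons` prepends the edge `ab`, which may meet the rest of the path
only in `b`. -/
inductive NP : ℝ × ℝ → ℝ × ℝ → ℕ → Set (ℝ × ℝ) → Prop
  | single (a : ℝ × ℝ) : NP a a 0 {a}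
  | cons {a b z : ℝ × ℝ} {k : ℕ} {T : Set (ℝ × ℝ)} (hab : a ≠ b)
      (h : ∀ P ∈ segment ℝ a b, P ∈ T → P = b) (hT : NP b z k T) :
      NP a z (k + 1) (segment ℝ a b ∪ T)

lemma NP.left_mem {a z k T} (h : NP a z k T) : a ∈ T := by
  cases h
  · simp
  · exact Or.inl (left_mem_segment ..)

lemma NP.right_mem {a z k T} (h : NP a z k T) : z ∈ T := by
  induction h with
  | single => simp
  | cons _ _ _ ih => exact Or.inr ih

lemma NP.append {a z k T y l U} (h : NP a z k T) (h' : NP z y l U)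
    (hTU : ∀ P ∈ T, P ∈ U → P = z) : NP a y (k + l) (T ∪ U) := by
  induction h with
  | single a =>
    have : ({a} : Set (ℝ × ℝ)) ∪ U = U := by
      rw [Set.union_eq_right]; simpa using h'.left_mem
    rw [this]; simpa using h'
  | @cons a b z k T hab hseg hT ih =>
    rw [Set.union_assoc, show k + 1 + l = k + l + 1 by ring]
    refine NP.cons hab ?_ (ih h' fun P hP => hTU P (Or.inr hP))
    rintro P hP (hPT | hPU)
    · exact hseg P hP hPT
    · have := hTU P (Or.inl hP) hPU
      subst this
      exact hseg _ hP hT.right_mem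

/-- `Strip a z k S`: some noncrossing polygonal path from `a` to `z` with `k` edges covers `S` and
has `a` as its only leftmost and `z` as its only rightmost point.  Such paths can be concatenated
freely. -/
def Strip (a z : ℝ × ℝ) (k : ℕ) (S : Set (ℝ × ℝ)) : Prop :=
  ∃ T, NP a z k T ∧ S ⊆ T ∧ ∀ P ∈ T, (P = a ∨ a.1 < P.1) ∧ (P = z ∨ P.1 < z.1)

lemma Strip.glue {a z y k l S R} (h : Strip a z k S) (h' : Strip z y l R) :
    Strip a y (k + l) (S ∪ R) := by
  obtain ⟨T, hT, hS, hx⟩ := h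
  obtain ⟨U, hU, hR, hx'⟩ := h'
  have hza := (hx z hT.right_mem).1
  have hzy := (hx' z hU.left_mem).2
  refine ⟨T ∪ U, hT.append hU ?_, Set.union_subset_union hS hR, ?_⟩
  · intro P hP hP'
    rcases (hx P hP).2 with h | h
    · exact h
    · rcases (hx' P hP').1 with h' | h'
      · exact h'
      · exact absurd h (by linarith)
  · rintro P (hP | hP)
    · refine ⟨(hx P hP).1, ?_⟩
      rcases (hx P hP).2 with rfl | h
      · exact hzy
      · right
        rcases hzy with rfl | h'
        · exact h
        · exact h.trans h'
    · refine ⟨?_, (hx' P hP).2⟩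
      rcases (hx' P hP).1 with rfl | h
      · exact hza
      · right
        rcases hza with rfl | h'
        · exact h
        · exact h'.trans h

lemma Strip.mono {a z k S R} (h : Strip a z k S) (hR : R ⊆ S) : Strip a z k R := by
  obtain ⟨T, hT, hS, hx⟩ := h
  exact ⟨T, hT, hR.trans hS, hx⟩

lemma lt_seg_x {a b P : ℝ × ℝ} {x : ℝ} (h : P ∈ segment ℝ a b) (ha : x < a.1) (hb : x < b.1) :
    x < P.1 :=
  (lt_min ha hb).trans_le (le_seg_x h (min_le_left _ _) (min_le_right _ _))

lemma seg_x_lt {a b P : ℝ × ℝ} {x : ℝ} (h : P ∈ segment ℝ a b) (ha : a.1 < x) (hb : b.1 < x) :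
    P.1 < x :=
  (seg_x_le h (le_max_left _ _) (le_max_right _ _)).trans_lt (max_lt ha hb)

lemma seg_left_or {a b P : ℝ × ℝ} (h : P ∈ segment ℝ a b) (hab : a.1 < b.1) :
    P = a ∨ a.1 < P.1 := by
  obtain ⟨t, h0, h1, hx, hy⟩ := seg_param h
  rcases h0.eq_or_lt with rfl | h0
  · left; ext <;> simp [hx, hy]
  · right; rw [hx]; have := mul_pos h0 (sub_pos.2 hab); linarith

lemma seg_right_or {a b P : ℝ × ℝ} (h : P ∈ segment ℝ a b) (hab : a.1 < b.1) :
    P = b ∨ P.1 < b.1 := by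
  obtain ⟨t, h0, h1, hx, hy⟩ := seg_param h
  rcases h1.eq_or_lt with rfl | h1
  · left; ext
    · rw [hx]; ring
    · rw [hy]; ring
  · right; rw [hx]; have := mul_pos (sub_pos.2 h1) (sub_pos.2 hab); linarith

lemma Strip.edge {a z : ℝ × ℝ} (h : a.1 < z.1) : Strip a z 1 (segment ℝ a z) := by
  refine ⟨segment ℝ a z ∪ {z}, NP.cons (by rintro rfl; exact lt_irrefl _ h) ?_ (NP.single z),
    Set.subset_union_left, ?_⟩
  · intro P _ hP; simpa using hP
  · rintro P (hP | hP)
    · exact ⟨seg_left_or hP h, seg_right_or hP h⟩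
    · obtain rfl : P = z := by simpa using hP
      exact ⟨Or.inr h, Or.inl rfl⟩

lemma NP.edge {a b : ℝ × ℝ} (h : a ≠ b) : NP a b 1 (segment ℝ a b) := by
  have := NP.cons h (fun P _ hP => by simpa using hP) (NP.single b)
  rwa [Set.union_eq_left.2 (by simpa using right_mem_segment ℝ a b)] at this

lemma ne_of_x {a b : ℝ × ℝ} (h : a.1 < b.1) : a ≠ b := by rintro rfl; exact lt_irrefl _ h

/-! ### Configurations that allow a saving -/

lemma save_line {a b c : ℝ × ℝ} (hab : a.1 < b.1) (hbc : b.1 < c.1) (h : D a b c = 0) :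
    Strip a c 1 {a, b, c} := by
  refine (Strip.edge (hab.trans hbc)).mono ?_
  have hb : b ∈ segment ℝ a c :=
    mem_seg_of_D hab.le hbc.le (hab.trans hbc) (by rw [D_swap, h, neg_zero])
  rintro P (rfl | rfl | rfl)
  · exact left_mem_segment ..
  · exact hb
  · exact right_mem_segment ..

/-- Four points in convex or concave position, consecutive from left to right, need two edges
only. -/
lemma save_hook {a b c d : ℝ × ℝ} (hab : a.1 < b.1) (hbc : b.1 < c.1) (hcd : c.1 < d.1)
    (h : (D a b c ≤ 0 ∧ D b c d ≤ 0) ∨ (0 ≤ D a b c ∧ 0 ≤ D b c d)) :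
    Strip a d 2 {a, b, c, d} := by
  obtain ⟨q, h1, h2, hb, hc, -, -⟩ := hook hab hbc hcd h
  refine ((Strip.edge (by linarith : a.1 < q.1)).glue
    (Strip.edge (by linarith : q.1 < d.1))).mono ?_
  rintro P (rfl | rfl | rfl | rfl)
  · exact Or.inl (left_mem_segment ..)
  · exact Or.inl hb
  · exact Or.inr hc
  · exact Or.inr (right_mem_segment ..)

/-- The first case in which the four middle points of a six-point zigzag `z a b c d e` are not
in convex position.  The path is `z q d c e` with `q` the hook vertex of the cup `z a b d`. -/
lemma save_six_left {z a b c d e : ℝ × ℝ} (hza : z.1 < a.1) (hab : a.1 < b.1) (hbc : b.1 < c.1)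
    (hcd : c.1 < d.1) (hde : d.1 < e.1) (h1 : 0 ≤ D z a b) (h2 : 0 ≤ D a b d)
    (h3 : 0 < D b c d) (h4 : D c d e < 0) : Strip z e 4 {z, a, b, c, d, e} := by
  obtain ⟨q, hq1, hq2, ha, hb, -, hq⟩ := hook hza hab (hbc.trans hcd) (Or.inr ⟨h1, h2⟩)
  have hbdc : D b d c < 0 := by rw [D_swap]; linarith
  refine ⟨_, NP.cons (b := q) (ne_of_x (by linarith)) ?_ (NP.cons (b := d) (ne_of_x (by linarith)) ?_
    (NP.cons (b := c) (ne_of_x (by linarith)).symm ?_ (NP.edge (ne_of_x (by linarith))))), ?_, ?_⟩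
  · rintro P hP (h | h | h)
    · exact adj_sorted (by linarith) (by linarith) hP h
    · have := seg_x_le hP (by linarith) hq2
      have := le_seg_x h hcd.le le_rfl
      linarith
    · have := seg_x_le hP (by linarith) hq2
      have := le_seg_x h le_rfl (by linarith)
      linarith
  · rintro P hP (h | h)
    · exact adj_eq hq (D_right b d) hbdc.ne hP h
    · exfalso
      have hx := le_seg_x h le_rfl (by linarith)
      have hx' := seg_x_le hP (by linarith : q.1 ≤ d.1) le_rfl
      have hD : D b d P = 0 := le_antisymm (D_seg_nonpos hP hq.le (D_right b d).le)
        (D_seg_nonneg hP hq.ge (D_right b d).ge)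
      have hP' : D c e P = 0 := le_antisymm
        (D_seg_nonpos h (D_left c e).le (D_right c e).le)
        (D_seg_nonneg h (D_left c e).ge (D_right c e).ge)
      -- `P` lies on `ce` and on `bd`, while `c` is below `bd` and `d` is above `ce`
      exact sep (u := c) (v := e) (w := b) (z := d) (s := c) (t := d) (by linarith) (by linarith)
        hx hx' (by simp) hbdc.le (Or.inr hbdc) (by rw [D_swap]; linarith) (by simp)
        (Or.inl (by rw [D_swap]; linarith)) hP'.le hD.ge
  · intro P hP h
    rw [segment_symm] at hP
    refine adj_eq (p := c) (r := d) (D_right c d) (D_left c d) h4.ne ?_ h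
    rwa [segment_symm]
  · rintro P (rfl | rfl | rfl | rfl | rfl | rfl)
    · exact Or.inl (left_mem_segment ..)
    · exact Or.inl ha
    · exact Or.inr (Or.inl hb)
    · exact Or.inr (Or.inr (Or.inr (left_mem_segment ..)))
    · exact Or.inr (Or.inl (right_mem_segment ..))
    · exact Or.inr (Or.inr (Or.inr (right_mem_segment ..)))
  · rintro P (h | h | h | h)
    · exact ⟨seg_left_or h (by linarith), Or.inr (seg_x_lt h (by linarith) (by linarith))⟩
    · exact ⟨Or.inr (lt_seg_x h (by linarith) (by linarith)),
        Or.inr (seg_x_lt h (by linarith) (by linarith))⟩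
    · exact ⟨Or.inr (lt_seg_x h (by linarith) (by linarith)),
        Or.inr (seg_x_lt h (by linarith) (by linarith))⟩
    · exact ⟨Or.inr (lt_seg_x h (by linarith) (by linarith)), seg_right_or h (by linarith)⟩

/-- The second case in which the four middle points of a six-point zigzag `z a b c d e` are not
in convex position, the image of the first under a half turn.  The path is `z b a q e` with `q`
the hook vertex of the cap `a c d e`. -/
lemma save_six_right {z a b c d e : ℝ × ℝ} (hza : z.1 < a.1) (hab : a.1 < b.1) (hbc : b.1 < c.1)
    (hcd : c.1 < d.1) (hde : d.1 < e.1) (h1 : 0 < D z a b) (h2 : D a b c < 0)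
    (h3 : D a c d ≤ 0) (h4 : D c d e ≤ 0) : Strip z e 4 {z, a, b, c, d, e} := by
  obtain ⟨q, hq1, hq2, hc, hd, hq, -⟩ := hook (hab.trans hbc) hcd hde (Or.inl ⟨h3, h4⟩)
  have hacb : 0 < D a c b := by rw [D_swap]; linarith
  have hzba : D z b a < 0 := by rw [D_swap]; linarith
  refine ⟨_, NP.cons (b := b) (ne_of_x (by linarith)) ?_ (NP.cons (b := a)
    (ne_of_x (by linarith)).symm ?_ (NP.cons (b := q) (ne_of_x (by linarith)) ?_
    (NP.edge (ne_of_x (by linarith))))), ?_, ?_⟩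
  · rintro P hP (h | h | h)
    · exact adj_eq (D_left z b) (D_right z b) hzba.ne hP h
    · exfalso
      have hx := le_seg_x h le_rfl (by linarith)
      have hx' := seg_x_le hP (by linarith : z.1 ≤ b.1) le_rfl
      have hD : D a c P = 0 := le_antisymm (D_seg_nonpos h (D_left a c).le hq.le)
        (D_seg_nonneg h (D_left a c).ge hq.ge)
      have hP' : D z b P = 0 := le_antisymm
        (D_seg_nonpos hP (D_left z b).le (D_right z b).le)
        (D_seg_nonneg hP (D_left z b).ge (D_right z b).ge)
      -- `P` lies on `ac` and on `zb`, while `a` is below `zb` and `b` is above `ac`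
      exact sep (u := a) (v := c) (w := z) (z := b) (s := a) (t := b) (by linarith) (by linarith)
        hx hx' (by simp) hzba.le (Or.inr hzba) hacb.le (by simp) (Or.inl hacb) hD.le hP'.ge
    · have := seg_x_le hP (by linarith) le_rfl
      have := le_seg_x h hq1 (by linarith)
      linarith
  · rintro P hP (h | h)
    · rw [segment_symm] at hP h
      exact adj_eq hq (D_left a c) hacb.ne' h hP
    · have := seg_x_le hP le_rfl hab.le
      have := le_seg_x h hq1 (by linarith)
      linarith
  · exact fun P hP h => adj_sorted (by linarith) (by linarith) hP h
  · rintro P (rfl | rfl | rfl | rfl | rfl | rfl)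
    · exact Or.inl (left_mem_segment ..)
    · exact Or.inr (Or.inl (right_mem_segment ..))
    · exact Or.inl (right_mem_segment ..)
    · exact Or.inr (Or.inr (Or.inl hc))
    · exact Or.inr (Or.inr (Or.inr hd))
    · exact Or.inr (Or.inr (Or.inr (right_mem_segment ..)))
  · rintro P (h | h | h | h)
    · exact ⟨seg_left_or h (by linarith), Or.inr (seg_x_lt h (by linarith) (by linarith))⟩
    · exact ⟨Or.inr (lt_seg_x h (by linarith) (by linarith)),
        Or.inr (seg_x_lt h (by linarith) (by linarith))⟩
    · exact ⟨Or.inr (lt_seg_x h (by linarith) (by linarith)),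
        Or.inr (seg_x_lt h (by linarith) (by linarith))⟩
    · exact ⟨Or.inr (lt_seg_x h (by linarith) (by linarith)), seg_right_or h (by linarith)⟩

lemma D_seg_zero {a b P p r : ℝ × ℝ} (h : P ∈ segment ℝ a b) (ha : D p r a = 0)
    (hb : D p r b = 0) : D p r P = 0 :=
  le_antisymm (D_seg_nonpos h ha.le hb.le) (D_seg_nonneg h ha.ge hb.ge)

/-- A zigzag `p₀ … p₆` with lower points of even index, in which the three upper points form a cap.
The path is `p₀ p₂ p₄ p₁ q p₆` with `q` the hook vertex of the cap `p₁ p₃ p₅ p₆`. -/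
lemma save_seven {p0 p1 p2 p3 p4 p5 p6 : ℝ × ℝ} (x01 : p0.1 < p1.1) (x12 : p1.1 < p2.1)
    (x23 : p2.1 < p3.1) (x34 : p3.1 < p4.1) (x45 : p4.1 < p5.1) (x56 : p5.1 < p6.1)
    (h012 : D p0 p1 p2 < 0) (h123 : 0 < D p1 p2 p3) (h124 : 0 < D p1 p2 p4)
    (h134 : D p1 p3 p4 < 0) (h234 : D p2 p3 p4 < 0) (h356 : D p3 p5 p6 ≤ 0)
    (h456 : D p4 p5 p6 < 0) (h135 : D p1 p3 p5 ≤ 0) :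
    Strip p0 p6 5 {p0, p1, p2, p3, p4, p5, p6} := by
  obtain ⟨q, hq1, hq2, h3, h5, hq, hq'⟩ :=
    hook (x12.trans x23) (x34.trans x45) x56 (Or.inl ⟨h135, h356⟩)
  have k021 : 0 < D p0 p2 p1 := by rw [D_swap]; linarith
  have k132 : D p1 p3 p2 < 0 := by rw [D_swap]; linarith
  have k142 : D p1 p4 p2 < 0 := by rw [D_swap]; linarith
  have k143 : 0 < D p1 p4 p3 := by rw [D_swap]; linarith
  have k243 : 0 < D p2 p4 p3 := by rw [D_swap]; linarith
  have k563 : D p5 p6 p3 ≤ 0 := by rw [D_rot]; linarith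
  have k564 : D p5 p6 p4 < 0 := by rw [D_rot]; linarith
  refine ⟨_, NP.cons (b := p2) (ne_of_x (by linarith)) ?_ (NP.cons (b := p4)
    (ne_of_x (by linarith)) ?_ (NP.cons (b := p1) (ne_of_x (by linarith)).symm ?_
    (NP.cons (b := q) (ne_of_x (by linarith)) ?_ (NP.edge (ne_of_x (by linarith)))))), ?_, ?_⟩
  · rintro P hP (h | h | h | h)
    · exact adj_sorted (by linarith) (by linarith) hP h
    · exfalso
      -- `p₁` is above `p₀p₂` and `p₂` is below `p₁p₄`
      rw [segment_symm] at h
      exact sep (u := p0) (v := p2) (w := p1) (z := p4) (s := p1) (t := p2) (by linarith)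
        (by linarith) (le_seg_x h le_rfl (by linarith)) (seg_x_le hP (by linarith) le_rfl)
        k021.le (by simp) (Or.inl k021) (by simp) k142.le (Or.inr k142)
        (D_seg_zero hP (by simp) (by simp)).le (D_seg_zero h (by simp) (by simp)).ge
    · exfalso
      exact sep (u := p0) (v := p2) (w := p1) (z := p3) (s := p1) (t := p2) (by linarith)
        (by linarith) (le_seg_x h le_rfl (by linarith)) (seg_x_le hP (by linarith) le_rfl)
        k021.le (by simp) (Or.inl k021) (by simp) k132.le (Or.inr k132)
        (D_seg_zero hP (by simp) (by simp)).le (D_seg_zero h (by simp) hq).ge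
    · have := seg_x_le hP (by linarith) le_rfl
      have := le_seg_x h hq1 (by linarith)
      linarith
  · rintro P hP (h | h | h)
    · rw [segment_symm] at hP h
      exact adj_eq (p := p1) (r := p4) (by simp) (by simp) k142.ne h (by rwa [segment_symm] at hP ⊢)
    · exfalso
      exact sep (u := p2) (v := p4) (w := p1) (z := p3) (s := p2) (t := p4) (by linarith)
        (by linarith) (le_seg_x hP le_rfl (by linarith)) (seg_x_le hP (by linarith) le_rfl)
        (by simp) k132.le (Or.inr k132) (by simp) h134.le (Or.inr h134)
        (D_seg_zero hP (by simp) (by simp)).le (D_seg_zero h (by simp) hq).ge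
    · exfalso
      exact sep (u := p2) (v := p4) (w := p5) (z := p6) (s := p3) (t := p4) (by linarith)
        (by linarith) (le_seg_x h hq1 (by linarith)) (seg_x_le hP (by linarith) le_rfl)
        k243.le k563 (Or.inl k243) (by simp) k564.le (Or.inr k564)
        (D_seg_zero hP (by simp) (by simp)).le (D_seg_zero h hq' (by simp)).ge
  · rintro P hP (h | h)
    · rw [segment_symm] at hP h
      exact adj_eq hq (by simp) h134.ne h hP
    · exfalso
      rw [segment_symm] at hP
      exact sep (u := p1) (v := p4) (w := p5) (z := p6) (s := p3) (t := p4) (by linarith)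
        (by linarith) (le_seg_x h hq1 (by linarith)) (seg_x_le hP (by linarith) le_rfl)
        k143.le k563 (Or.inl k143) (by simp) k564.le (Or.inr k564)
        (D_seg_zero hP (by simp) (by simp)).le (D_seg_zero h hq' (by simp)).ge
  · exact fun P hP h => adj_sorted (by linarith) (by linarith) hP h
  · rintro P (rfl | rfl | rfl | rfl | rfl | rfl | rfl)
    · exact Or.inl (left_mem_segment ..)
    · exact Or.inr (Or.inr (Or.inl (right_mem_segment ..)))
    · exact Or.inl (right_mem_segment ..)
    · exact Or.inr (Or.inr (Or.inr (Or.inl h3)))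
    · exact Or.inr (Or.inl (right_mem_segment ..))
    · exact Or.inr (Or.inr (Or.inr (Or.inr h5)))
    · exact Or.inr (Or.inr (Or.inr (Or.inr (right_mem_segment ..))))
  · rintro P (h | h | h | h | h)
    · exact ⟨seg_left_or h (by linarith), Or.inr (seg_x_lt h (by linarith) (by linarith))⟩
    · exact ⟨Or.inr (lt_seg_x h (by linarith) (by linarith)),
        Or.inr (seg_x_lt h (by linarith) (by linarith))⟩
    · exact ⟨Or.inr (lt_seg_x h (by linarith) (by linarith)),
        Or.inr (seg_x_lt h (by linarith) (by linarith))⟩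
    · exact ⟨Or.inr (lt_seg_x h (by linarith) (by linarith)),
        Or.inr (seg_x_lt h (by linarith) (by linarith))⟩
    · exact ⟨Or.inr (lt_seg_x h (by linarith) (by linarith)), seg_right_or h (by linarith)⟩

/-- A zigzag `p₁ … p₈` with lower points of even index, whose upper points form a cup and whose
lower points form a cap.  The path is `p₁ q p₇ p₆ p₄ p₂ p₈` with `q` the hook vertex of the cup
`p₁ p₃ p₅ p₇`; its last edge runs below the cap of the lower points. -/
lemma save_eight {p1 p2 p3 p4 p5 p6 p7 p8 : ℝ × ℝ} (x12 : p1.1 < p2.1)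
    (x23 : p2.1 < p3.1) (x34 : p3.1 < p4.1) (x45 : p4.1 < p5.1) (x56 : p5.1 < p6.1)
    (x67 : p6.1 < p7.1) (x78 : p7.1 < p8.1)
    (h135 : 0 ≤ D p1 p3 p5) (h357 : 0 ≤ D p3 p5 p7) (h137 : 0 ≤ D p1 p3 p7)
    (h157 : 0 ≤ D p1 p5 p7)
    (h246 : D p2 p4 p6 < 0) (h468 : D p4 p6 p8 < 0) (h248 : D p2 p4 p8 < 0)
    (h268 : D p2 p6 p8 < 0) (h123 : 0 < D p1 p2 p3) (h134 : D p1 p3 p4 < 0)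
    (h457 : D p4 p5 p7 < 0) (h467 : 0 < D p4 p6 p7)
    (h567 : 0 < D p5 p6 p7) (h678 : D p6 p7 p8 < 0) :
    Strip p1 p8 6 {p1, p2, p3, p4, p5, p6, p7, p8} := by
  obtain ⟨q, hq1, hq2, h3, h5, hq, hq'⟩ :=
    hook (x12.trans x23) (x34.trans x45) (x56.trans x67) (Or.inr ⟨h135, h357⟩)
  have k132 : D p1 p3 p2 < 0 := by rw [D_swap]; linarith
  have k574 : D p5 p7 p4 < 0 := by rw [D_rot]; linarith
  have k576 : D p5 p7 p6 < 0 := by rw [D_swap]; linarith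
  have k284 : 0 < D p2 p8 p4 := by rw [D_swap]; linarith
  have k286 : 0 < D p2 p8 p6 := by rw [D_swap]; linarith
  have k571 : 0 ≤ D p5 p7 p1 := by rw [D_rot]; linarith
  -- the polygonal line `p₁ q p₇` runs above `p₂p₄p₆` and `p₂p₈`
  have main : ∀ P : ℝ × ℝ, 0 ≤ D p1 p3 P → 0 ≤ D p5 p7 P → D p2 p4 P ≤ 0 → D p4 p6 P ≤ 0 →
      p2.1 ≤ P.1 → P.1 ≤ p7.1 → False := by
    intro P g1 g2 g3 g4 g5 g6
    rcases le_total P.1 p4.1 with hx | hx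
    · exact sep (u := p2) (v := p4) (w := p1) (z := p3) (s := p2) (t := p4) (by linarith)
        (by linarith) g5 hx (by simp) k132.le (Or.inr k132) (by simp) h134.le (Or.inr h134) g3 g1
    · exact sep (u := p4) (v := p6) (w := p5) (z := p7) (s := p4) (t := p7) (by linarith)
        (by linarith) hx g6 (by simp) k574.le (Or.inr k574) h467.le (by simp) (Or.inl h467) g4 g2
  have up1 : ∀ P ∈ segment ℝ p1 q, 0 ≤ D p1 p3 P ∧ 0 ≤ D p5 p7 P ∧ P.1 ≤ p7.1 := fun P hP =>
    ⟨D_seg_nonneg hP (by simp) hq.ge, D_seg_nonneg hP k571 hq'.ge,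
      seg_x_le hP (by linarith) (by linarith)⟩
  have up2 : ∀ P ∈ segment ℝ q p7, 0 ≤ D p1 p3 P ∧ 0 ≤ D p5 p7 P ∧ P.1 ≤ p7.1 := fun P hP =>
    ⟨D_seg_nonneg hP hq.ge h137, D_seg_nonneg hP hq'.ge (by simp),
      seg_x_le hP (by linarith) (by linarith)⟩
  have k462 : D p4 p6 p2 ≤ 0 := by rw [D_rot]; linarith
  have lo1 : ∀ P ∈ segment ℝ p6 p4, D p2 p4 P ≤ 0 ∧ D p4 p6 P ≤ 0 ∧ p2.1 ≤ P.1 := fun P hP =>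
    ⟨D_seg_nonpos hP h246.le (by simp), D_seg_nonpos hP (by simp) (by simp),
      le_seg_x hP (by linarith) (by linarith)⟩
  have lo2 : ∀ P ∈ segment ℝ p4 p2, D p2 p4 P ≤ 0 ∧ D p4 p6 P ≤ 0 ∧ p2.1 ≤ P.1 := fun P hP =>
    ⟨D_seg_nonpos hP (by simp) (by simp), D_seg_nonpos hP (by simp) k462,
      le_seg_x hP (by linarith) (by linarith)⟩
  have lo3 : ∀ P ∈ segment ℝ p2 p8, D p2 p4 P ≤ 0 ∧ D p4 p6 P ≤ 0 ∧ p2.1 ≤ P.1 := fun P hP =>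
    ⟨D_seg_nonpos hP (by simp) h248.le, D_seg_nonpos hP k462 h468.le,
      le_seg_x hP (by linarith) (by linarith)⟩
  have contra : ∀ P : ℝ × ℝ, (0 ≤ D p1 p3 P ∧ 0 ≤ D p5 p7 P ∧ P.1 ≤ p7.1) →
      (D p2 p4 P ≤ 0 ∧ D p4 p6 P ≤ 0 ∧ p2.1 ≤ P.1) → False :=
    fun P g g' => main P g.1 g.2.1 g'.1 g'.2.1 g'.2.2 g.2.2
  refine ⟨_, NP.cons (b := q) (ne_of_x (by linarith)) ?_ (NP.cons (b := p7)
    (ne_of_x (by linarith)) ?_ (NP.cons (b := p6) (ne_of_x (by linarith)).symm ?_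
    (NP.cons (b := p4) (ne_of_x (by linarith)).symm ?_ (NP.cons (b := p2)
    (ne_of_x (by linarith)).symm ?_ (NP.edge (ne_of_x (by linarith))))))), ?_, ?_⟩
  · rintro P hP (h | h | h | h | h)
    · exact adj_sorted (by linarith) (by linarith) hP h
    · have := seg_x_le hP (by linarith) hq2
      have := le_seg_x h (x67.le) le_rfl
      linarith
    · exact (contra P (up1 P hP) (lo1 P h)).elim
    · exact (contra P (up1 P hP) (lo2 P h)).elim
    · exact (contra P (up1 P hP) (lo3 P h)).elim
  · rintro P hP (h | h | h | h)
    · exact adj_eq hq' (by simp) k576.ne hP h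
    · exact (contra P (up2 P hP) (lo1 P h)).elim
    · exact (contra P (up2 P hP) (lo2 P h)).elim
    · exact (contra P (up2 P hP) (lo3 P h)).elim
  · rintro P hP (h | h | h)
    · rw [segment_symm] at hP h
      exact adj_sorted (by linarith) (by linarith) h hP
    · have := le_seg_x hP (by linarith) le_rfl
      have := seg_x_le h le_rfl (by linarith)
      linarith
    · exfalso
      rw [segment_symm] at hP
      exact sep (u := p2) (v := p8) (w := p6) (z := p7) (s := p6) (t := p8) (by linarith)
        (by linarith) (le_seg_x hP le_rfl (by linarith)) (seg_x_le h (by linarith) le_rfl)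
        k286.le (by simp) (Or.inl k286) (by simp) h678.le (Or.inr h678)
        (D_seg_zero h (by simp) (by simp)).le (D_seg_zero hP (by simp) (by simp)).ge
  · rintro P hP (h | h)
    · rw [segment_symm] at hP h
      exact adj_sorted (by linarith) (by linarith) h hP
    · exfalso
      rw [segment_symm] at hP
      exact sep (u := p2) (v := p8) (w := p4) (z := p6) (s := p4) (t := p6) (by linarith)
        (by linarith) (le_seg_x hP le_rfl (by linarith)) (seg_x_le hP (by linarith) le_rfl)
        k284.le (by simp) (Or.inl k284) k286.le (by simp) (Or.inl k286)
        (D_seg_zero h (by simp) (by simp)).le (D_seg_zero hP (by simp) (by simp)).ge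
  · intro P hP h
    rw [segment_symm] at hP h
    exact adj_eq (p := p2) (r := p8) (by simp) (by simp) k284.ne' h hP
  · rintro P (rfl | rfl | rfl | rfl | rfl | rfl | rfl | rfl)
    · exact Or.inl (left_mem_segment ..)
    · exact Or.inr (Or.inr (Or.inr (Or.inr (Or.inl (right_mem_segment ..)))))
    · exact Or.inl h3
    · exact Or.inr (Or.inr (Or.inr (Or.inl (right_mem_segment ..))))
    · exact Or.inr (Or.inl h5)
    · exact Or.inr (Or.inr (Or.inl (right_mem_segment ..)))
    · exact Or.inr (Or.inl (right_mem_segment ..))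
    · exact Or.inr (Or.inr (Or.inr (Or.inr (Or.inr (right_mem_segment ..)))))
  · rintro P (h | h | h | h | h | h)
    · exact ⟨seg_left_or h (by linarith), Or.inr (seg_x_lt h (by linarith) (by linarith))⟩
    · exact ⟨Or.inr (lt_seg_x h (by linarith) (by linarith)),
        Or.inr (seg_x_lt h (by linarith) (by linarith))⟩
    · exact ⟨Or.inr (lt_seg_x h (by linarith) (by linarith)),
        Or.inr (seg_x_lt h (by linarith) (by linarith))⟩
    · exact ⟨Or.inr (lt_seg_x h (by linarith) (by linarith)),
        Or.inr (seg_x_lt h (by linarith) (by linarith))⟩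
    · exact ⟨Or.inr (lt_seg_x h (by linarith) (by linarith)),
        Or.inr (seg_x_lt h (by linarith) (by linarith))⟩
    · exact ⟨Or.inr (lt_seg_x h (by linarith) (by linarith)), seg_right_or h (by linarith)⟩

/-! ### Reflection in the horizontal axis -/

lemma NP.map (e : (ℝ × ℝ) ≃ₗ[ℝ] (ℝ × ℝ)) {a z k T} (h : NP a z k T) :
    NP (e a) (e z) k (e '' T) := by
  induction h with
  | single a => simpa using NP.single (e a)
  | @cons a b z k T hab hseg hT ih =>
    have hs : e '' segment ℝ a b = segment ℝ (e a) (e b) :=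
      image_segment ℝ (e : (ℝ × ℝ) →ₗ[ℝ] (ℝ × ℝ)).toAffineMap a b
    rw [Set.image_union, hs]
    refine NP.cons (e.injective.ne hab) ?_ ih
    rintro P hP ⟨Q, hQ, rfl⟩
    rw [← hs] at hP
    obtain ⟨R, hR, hRQ⟩ := hP
    obtain rfl := e.injective hRQ
    rw [hseg _ hR hQ]

/-- Reflection in the horizontal axis. -/
def mirror : (ℝ × ℝ) ≃ₗ[ℝ] (ℝ × ℝ) :=
  (LinearEquiv.refl ℝ ℝ).prodCongr (LinearEquiv.neg ℝ)

@[simp] lemma mirror_fst (a : ℝ × ℝ) : (mirror a).1 = a.1 := rfl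
@[simp] lemma mirror_snd (a : ℝ × ℝ) : (mirror a).2 = -a.2 := rfl
@[simp] lemma mirror_mirror (a : ℝ × ℝ) : mirror (mirror a) = a := by ext <;> simp
@[simp] lemma D_mirror (a b c : ℝ × ℝ) : D (mirror a) (mirror b) (mirror c) = - D a b c := by
  simp only [D, mirror_fst, mirror_snd]; ring

lemma Strip.reflect {a z k S} (h : Strip a z k S) :
    Strip (mirror a) (mirror z) k (mirror '' S) := by
  obtain ⟨T, hT, hS, hx⟩ := h
  refine ⟨_, hT.map mirror, Set.image_mono hS, ?_⟩
  rintro _ ⟨P, hP, rfl⟩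
  obtain ⟨h1, h2⟩ := hx P hP
  exact ⟨h1.imp (congrArg _) id, h2.imp (congrArg _) id⟩

/-! ### Eleven consecutive points allow a saving -/

/-- The points `p 0, …, p n` are sorted from left to right, and no block of consecutive points
among them can be covered within its strip with fewer edges than the monotone path uses. -/
structure NoSave (p : ℕ → ℝ × ℝ) (n : ℕ) : Prop where
  x : ∀ i j, i < j → j ≤ n → (p i).1 < (p j).1
  ns : ∀ i j, i < j → j ≤ n → ¬ Strip (p i) (p j) (j - i - 1) (p '' Set.Icc i j)

lemma NoSave.shift {p n m} (H : NoSave p n) (s : ℕ) (h : s + m ≤ n) :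
    NoSave (fun i => p (s + i)) m where
  x i j hij hj := H.x _ _ (by omega) (by omega)
  ns i j hij hj hS := H.ns (s + i) (s + j) (by omega) (by omega) <| by
    rw [show s + j - (s + i) - 1 = j - i - 1 by omega]
    refine hS.mono ?_
    rintro _ ⟨m, ⟨h1, h2⟩, rfl⟩
    exact ⟨m - s, ⟨by omega, by omega⟩, by simp only; congr 1; omega⟩

lemma NoSave.reflect {p n} (H : NoSave p n) : NoSave (fun i => mirror (p i)) n where
  x i j hij hj := H.x i j hij hj
  ns i j hij hj hS := H.ns i j hij hj <| by
    have := hS.reflect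
    simp only [mirror_mirror, Set.image_image] at this
    exact this

/-- A turn that is not to the left is strictly to the right, and the next turn is to the left. -/
lemma NoSave.zig {p} (H : NoSave p 3) (h : D (p 0) (p 1) (p 2) ≤ 0) :
    D (p 0) (p 1) (p 2) < 0 ∧ 0 < D (p 1) (p 2) (p 3) := by
  have x01 := H.x 0 1 (by omega) (by omega)
  have x12 := H.x 1 2 (by omega) (by omega)
  have x23 := H.x 2 3 (by omega) (by omega)
  constructor
  · refine lt_of_le_of_ne h fun h0 => H.ns 0 2 (by omega) (by omega) ?_
    refine (save_line x01 x12 h0).mono ?_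
    rintro _ ⟨m, ⟨h1, h2⟩, rfl⟩
    interval_cases m <;> simp
  · by_contra! h0
    refine H.ns 0 3 (by omega) (by omega) ((save_hook x01 x12 x23 (Or.inl ⟨h, h0⟩)).mono ?_)
    rintro _ ⟨m, ⟨h1, h2⟩, rfl⟩
    interval_cases m <;> simp

lemma NoSave.zig_mirror {p} (H : NoSave p 3) (h : 0 ≤ D (p 0) (p 1) (p 2)) :
    0 < D (p 0) (p 1) (p 2) ∧ D (p 1) (p 2) (p 3) < 0 := by
  simpa using H.reflect.zig (by simpa using h)

lemma NoSave.zig_all {p n} (H : NoSave p n) (h : D (p 0) (p 1) (p 2) < 0) (i : ℕ)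
    (hi : 2 * i + 3 ≤ n) :
    D (p (2 * i)) (p (2 * i + 1)) (p (2 * i + 2)) < 0 ∧
      0 < D (p (2 * i + 1)) (p (2 * i + 2)) (p (2 * i + 3)) := by
  induction i with
  | zero => exact (H.shift (m := 3) 0 (by omega)).zig h.le
  | succ i ih =>
    have h1 := ih (by omega)
    have h2 := (H.shift (m := 3) (2 * i + 1) (by omega)).zig_mirror h1.2.le
    exact (H.shift (m := 3) (2 * i + 2) (by omega)).zig h2.2.le

/-- In a zigzag of six points whose first turn is to the left, the second to fifth point are in
convex position. -/
lemma NoSave.tall {p} (H : NoSave p 5) (h : 0 < D (p 0) (p 1) (p 2)) :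
    D (p 1) (p 2) (p 4) < 0 ∧ 0 < D (p 1) (p 3) (p 4) := by
  have x01 := H.x 0 1 (by omega) (by omega)
  have x12 := H.x 1 2 (by omega) (by omega)
  have x23 := H.x 2 3 (by omega) (by omega)
  have x34 := H.x 3 4 (by omega) (by omega)
  have x45 := H.x 4 5 (by omega) (by omega)
  have h1 := (H.shift (m := 3) 0 (by omega)).zig_mirror h.le
  have h2 := (H.shift (m := 3) 1 (by omega)).zig h1.2.le
  have h3 := (H.shift (m := 3) 2 (by omega)).zig_mirror h2.2.le
  constructor
  · by_contra! h0
    refine H.ns 0 5 (by omega) (by omega)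
      ((save_six_left x01 x12 x23 x34 x45 h.le h0 h2.2 h3.2).mono ?_)
    rintro _ ⟨m, ⟨h1, h2⟩, rfl⟩
    interval_cases m <;> simp
  · by_contra! h0
    refine H.ns 0 5 (by omega) (by omega)
      ((save_six_right x01 x12 x23 x34 x45 h h1.2 h0 h3.2.le).mono ?_)
    rintro _ ⟨m, ⟨h1, h2⟩, rfl⟩
    interval_cases m <;> simp

lemma NoSave.tall_mirror {p} (H : NoSave p 5) (h : D (p 0) (p 1) (p 2) < 0) :
    0 < D (p 1) (p 2) (p 4) ∧ D (p 1) (p 3) (p 4) < 0 := by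
  simpa using H.reflect.tall (by simpa using h)

/-- If the points of odd index are the upper points of the zigzag, then `p 1, p 3, p 5` form a
cup. -/
lemma NoSave.outer {p} (H : NoSave p 7) (h : D (p 0) (p 1) (p 2) < 0) :
    0 < D (p 1) (p 3) (p 5) := by
  by_contra! h0
  have z0 := H.zig_all h 0 (by omega)
  have z1 := H.zig_all h 1 (by omega)
  have z2 := H.zig_all h 2 (by omega)
  have t := (H.shift (m := 5) 0 (by omega)).tall_mirror h
  have t' := (H.shift (m := 5) 2 (by omega)).tall_mirror z1.1
  refine H.ns 0 6 (by omega) (by omega) ((save_seven (H.x 0 1 (by omega) (by omega))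
    (H.x 1 2 (by omega) (by omega)) (H.x 2 3 (by omega) (by omega)) (H.x 3 4 (by omega) (by omega))
    (H.x 4 5 (by omega) (by omega)) (H.x 5 6 (by omega) (by omega)) h z0.2 t.1 t.2 z1.1 t'.2.le
    z2.1 h0).mono ?_)
  rintro _ ⟨m, ⟨h1, h2⟩, rfl⟩
  interval_cases m <;> simp

lemma NoSave.outer_mirror {p} (H : NoSave p 7) (h : 0 < D (p 0) (p 1) (p 2)) :
    D (p 1) (p 3) (p 5) < 0 := by
  simpa using H.reflect.outer (by simpa using h)

/-- If `a b c` and `b c d` turn left, so do `a b d` and `a c d`. -/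
lemma cup_trans {a b c d : ℝ × ℝ} (hab : a.1 < b.1) (hbc : b.1 < c.1) (hcd : c.1 < d.1)
    (h : 0 < D a b c) (h' : 0 < D b c d) : 0 < D a b d ∧ 0 < D a c d := by
  have e1 : (c.1 - b.1) * D a b d = (d.1 - b.1) * D a b c + (b.1 - a.1) * D b c d := by
    simp only [D]; ring
  have e2 : (c.1 - b.1) * D a c d = (d.1 - c.1) * D a b c + (c.1 - a.1) * D b c d := by
    simp only [D]; ring
  have p1 : 0 < c.1 - b.1 := by linarith
  have p2 : 0 < d.1 - b.1 := by linarith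
  have p3 : 0 < b.1 - a.1 := by linarith
  have p4 : 0 < d.1 - c.1 := by linarith
  have p5 : 0 < c.1 - a.1 := by linarith
  constructor
  · exact pos_of_mul_pos_right (by rw [e1]; positivity) p1.le
  · exact pos_of_mul_pos_right (by rw [e2]; positivity) p1.le

lemma cap_trans {a b c d : ℝ × ℝ} (hab : a.1 < b.1) (hbc : b.1 < c.1) (hcd : c.1 < d.1)
    (h : D a b c < 0) (h' : D b c d < 0) : D a b d < 0 ∧ D a c d < 0 := by
  have := cup_trans (a := mirror a) (b := mirror b) (c := mirror c) (d := mirror d) hab hbc hcd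
    (by simpa using h) (by simpa using h')
  simpa using this

lemma NoSave.false_of_neg {p} (H : NoSave p 10) (h : D (p 0) (p 1) (p 2) < 0) : False := by
  have z0 := H.zig_all h 0 (by omega)
  have z1 := H.zig_all h 1 (by omega)
  have z2 := H.zig_all h 2 (by omega)
  have z3 := H.zig_all h 3 (by omega)
  have o135 := (H.shift (m := 7) 0 (by omega)).outer h
  have o357 := (H.shift (m := 7) 2 (by omega)).outer z1.1
  have o246 := (H.shift (m := 7) 1 (by omega)).outer_mirror z0.2
  have o468 := (H.shift (m := 7) 3 (by omega)).outer_mirror z1.2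
  have t := (H.shift (m := 5) 0 (by omega)).tall_mirror h
  have t' := (H.shift (m := 5) 3 (by omega)).tall z1.2
  have up := cup_trans (H.x 1 3 (by omega) (by omega)) (H.x 3 5 (by omega) (by omega))
    (H.x 5 7 (by omega) (by omega)) o135 o357
  have lo := cap_trans (H.x 2 4 (by omega) (by omega)) (H.x 4 6 (by omega) (by omega))
    (H.x 6 8 (by omega) (by omega)) o246 o468
  refine H.ns 1 8 (by omega) (by omega) ((save_eight (H.x 1 2 (by omega) (by omega))
    (H.x 2 3 (by omega) (by omega)) (H.x 3 4 (by omega) (by omega)) (H.x 4 5 (by omega) (by omega))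
    (H.x 5 6 (by omega) (by omega)) (H.x 6 7 (by omega) (by omega)) (H.x 7 8 (by omega) (by omega))
    o135.le o357.le up.1.le up.2.le o246 o468 lo.1 lo.2 z0.2 t.2 t'.1 t'.2 z2.2 z3.1).mono ?_)
  rintro _ ⟨m, ⟨h1, h2⟩, rfl⟩
  interval_cases m <;> simp

/-- Among eleven points sorted from left to right, some consecutive block can be covered in its
strip with one edge fewer than the monotone path has. -/
lemma exists_saving (p : ℕ → ℝ × ℝ) (hx : ∀ i j, i < j → j ≤ 10 → (p i).1 < (p j).1) :
    ∃ i j, i < j ∧ j ≤ 10 ∧ Strip (p i) (p j) (j - i - 1) (p '' Set.Icc i j) := by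
  by_contra! hno
  have H : NoSave p 10 := ⟨hx, hno⟩
  rcases le_or_gt (D (p 0) (p 1) (p 2)) 0 with h | h
  · exact H.false_of_neg ((H.shift (m := 3) 0 (by omega)).zig h).1
  · exact H.reflect.false_of_neg (by simpa using h)

/-! ### A short path through all points -/

lemma monotone_strip (p : ℕ → ℝ × ℝ) (i k : ℕ)
    (hx : ∀ j, i ≤ j → j < i + k → (p j).1 < (p (j + 1)).1) :
    Strip (p i) (p (i + k)) k (p '' Set.Icc i (i + k)) := by
  induction k with
  | zero =>
    refine ⟨{p i}, NP.single _, by simp, fun P hP => ?_⟩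
    exact ⟨Or.inl (by simpa using hP), Or.inl (by simpa using hP)⟩
  | succ k ih =>
    refine ((ih fun j h1 h2 => hx j h1 (by omega)).glue
      (Strip.edge (hx (i + k) (by omega) (by omega)))).mono ?_
    rintro _ ⟨m, ⟨h1, h2⟩, rfl⟩
    rcases (show m ≤ i + k ∨ m = i + k + 1 by omega) with h | rfl
    · exact Or.inl ⟨m, ⟨h1, h⟩, rfl⟩
    · exact Or.inr (right_mem_segment ..)

/-- Eleven points sorted from left to right are covered by a path with nine edges. -/
lemma block_strip (p : ℕ → ℝ × ℝ) (hx : ∀ i j, i < j → j ≤ 10 → (p i).1 < (p j).1) :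
    Strip (p 0) (p 10) 9 (p '' Set.Icc 0 10) := by
  obtain ⟨i, j, hij, hj, hS⟩ := exists_saving p hx
  have h1 := monotone_strip p 0 i fun j _ h => hx _ _ (by omega) (by omega)
  have h2 := monotone_strip p j (10 - j) fun l _ h => hx _ _ (by omega) (by omega)
  rw [Nat.zero_add] at h1
  rw [show j + (10 - j) = 10 by omega] at h2
  have h3 := (h1.glue hS).glue h2
  rw [show i + (j - i - 1) + (10 - j) = 9 by omega] at h3
  refine h3.mono ?_
  rintro _ ⟨m, ⟨_, hm⟩, rfl⟩
  rcases (show m ≤ i ∨ (i ≤ m ∧ m ≤ j) ∨ j ≤ m by omega) with h | h | h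
  · exact Or.inl (Or.inl ⟨m, ⟨by omega, h⟩, rfl⟩)
  · exact Or.inl (Or.inr ⟨m, h, rfl⟩)
  · exact Or.inr ⟨m, ⟨h, hm⟩, rfl⟩

/-- The blocks of eleven points are joined by one edge each. -/
lemma sorted_strip (n : ℕ) : ∀ p : ℕ → ℝ × ℝ,
    (∀ i j, i < j → j ≤ n → (p i).1 < (p j).1) →
    Strip (p 0) (p n) (n - (n + 1) / 11) (p '' Set.Icc 0 n) := by
  induction n using Nat.strong_induction_on with
  | _ n ih =>
    intro p hx
    rcases (show n < 10 ∨ n = 10 ∨ 11 ≤ n by omega) with h | rfl | h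
    · have := monotone_strip p 0 n fun j _ h => hx _ _ (by omega) (by omega)
      rw [Nat.zero_add] at this
      rwa [show n - (n + 1) / 11 = n by omega]
    · exact block_strip p hx
    · have h1 := block_strip p fun i j hij hj => hx i j hij (by omega)
      have h2 := Strip.edge (hx 10 11 (by omega) (by omega))
      have h3 := ih (n - 11) (by omega) (fun i => p (11 + i))
        fun i j hij hj => hx _ _ (by omega) (by omega)
      simp only [Nat.add_zero] at h3
      rw [show 11 + (n - 11) = n by omega] at h3
      have h4 := (h1.glue h2).glue h3
      rw [show 9 + 1 + (n - 11 - (n - 11 + 1) / 11) = n - (n + 1) / 11 by omega] at h4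
      refine h4.mono ?_
      rintro _ ⟨m, ⟨_, hm⟩, rfl⟩
      rcases (show m ≤ 10 ∨ 11 ≤ m by omega) with h | h
      · exact Or.inl (Or.inl ⟨m, ⟨by omega, h⟩, rfl⟩)
      · exact Or.inr ⟨m - 11, ⟨by omega, by omega⟩, by simp only; congr 1; omega⟩

/-! ### Closing a path to a cycle -/

/-- `IsPath v k`: the vertices `v 0, …, v k` span a noncrossing polygonal path with `k` edges. -/
structure IsPath (v : ℕ → ℝ × ℝ) (k : ℕ) : Prop where
  ne : ∀ i < k, v i ≠ v (i + 1)
  adj : ∀ i, i + 1 < k → ∀ P ∈ segment ℝ (v i) (v (i + 1)),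
    P ∈ segment ℝ (v (i + 1)) (v (i + 2)) → P = v (i + 1)
  dis : ∀ i j, i + 1 < j → j < k → ∀ P ∈ segment ℝ (v i) (v (i + 1)),
    P ∉ segment ℝ (v j) (v (j + 1))

lemma IsPath.start_notMem {v k} (h : IsPath v k) {j : ℕ} (h1 : 1 ≤ j) (h2 : j < k) :
    v 0 ∉ segment ℝ (v j) (v (j + 1)) := by
  intro hm
  rcases h1.eq_or_lt with rfl | h1
  · exact h.ne 0 (by omega) (h.adj 0 h2 _ (left_mem_segment ..) hm)
  · exact h.dis 0 j h1 h2 _ (left_mem_segment ..) hm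

lemma IsPath.end_notMem {v k} (h : IsPath v k) {j : ℕ} (h1 : j + 1 < k) :
    v k ∉ segment ℝ (v j) (v (j + 1)) := by
  intro hm
  obtain ⟨l, rfl⟩ : ∃ l, k = l + 1 := ⟨k - 1, by omega⟩
  rcases (show j + 1 = l ∨ j + 1 < l by omega) with rfl | h2
  · exact h.ne (j + 1) (by omega) (h.adj j h1 _ hm (right_mem_segment ..)).symm
  · exact h.dis j l h2 (by omega) _ hm (right_mem_segment ..)

lemma NP.exists_isPath {a z k T} (h : NP a z k T) : ∃ v : ℕ → ℝ × ℝ, v 0 = a ∧ v k = z ∧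
    IsPath v k ∧ (∀ P ∈ T, P = z ∨ ∃ i < k, P ∈ segment ℝ (v i) (v (i + 1))) ∧
    ∀ i < k, segment ℝ (v i) (v (i + 1)) ⊆ T := by
  induction h with
  | single a =>
    exact ⟨fun _ => a, rfl, rfl, ⟨by omega, by omega, by omega⟩, fun P hP => Or.inl hP, by omega⟩
  | @cons a b z k T hab hseg hT ih =>
    obtain ⟨v, hv0, hvk, hv, hcov, hsub⟩ := ih
    subst hv0
    refine ⟨fun i => Nat.casesOn i a v, rfl, hvk, ⟨?_, ?_, ?_⟩, ?_, ?_⟩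
    · rintro (_ | i) hi
      · exact hab
      · exact hv.ne i (by omega)
    · rintro (_ | i) hi P hP hP'
      · exact hseg P hP (hsub 0 (by omega) hP')
      · exact hv.adj i (by omega) P hP hP'
    · rintro (_ | i) (_ | j) hij hj P hP hP'
      · omega
      · have := hseg P hP (hsub j (by omega) hP')
        subst this
        exact hv.start_notMem (by omega) (by omega) hP'
      · omega
      · exact hv.dis i j (by omega) (by omega) P hP hP'
    · rintro P (hP | hP)
      · exact Or.inr ⟨0, by omega, hP⟩
      · rcases hcov P hP with h | ⟨i, hi, h⟩
        · exact Or.inl h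
        · exact Or.inr ⟨i + 1, by omega, h⟩
    · rintro (_ | i) hi
      · exact Set.subset_union_left
      · exact (hsub i (by omega)).trans Set.subset_union_right

/-- A path with at least two edges whose end points are joined by an edge that does not meet it
otherwise is a noncrossing cycle. -/
lemma IsPath.isNoncrossingCycle {v k} (h : IsPath v k) (hk : 2 ≤ k)
    (hc : ∀ i < k, ∀ P ∈ segment ℝ (v i) (v (i + 1)), P ∈ segment ℝ (v k) (v 0) →
      P = v 0 ∨ P = v k) :
    IsNoncrossingCycle (fun i : Fin (k + 1) => v i) := by
  have e1 : ∀ i : Fin (k + 1), (i : ℕ) < k → ((i + 1 : Fin (k + 1)) : ℕ) = i + 1 := fun i hi => by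
    rw [Fin.val_add_one_of_lt (by rw [Fin.lt_def]; simpa using hi)]
  have e2 : ∀ i : Fin (k + 1), (i : ℕ) = k → ((i + 1 : Fin (k + 1)) : ℕ) = 0 := fun i hi => by
    obtain rfl : i = Fin.last k := Fin.ext (by simpa using hi)
    simp
  have c1 : ∀ i : Fin (k + 1), (i : ℕ) < k →
      cycleEdge (fun i : Fin (k + 1) => v i) i = segment ℝ (v i) (v (i + 1)) := fun i hi => by
    simp only [cycleEdge, e1 i hi]
  have c2 : ∀ i : Fin (k + 1), (i : ℕ) = k →
      cycleEdge (fun i : Fin (k + 1) => v i) i = segment ℝ (v k) (v 0) := fun i hi => by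
    simp only [cycleEdge, e2 i hi, hi]
  -- the closing edge is disjoint from all edges but the first and the last
  have far : ∀ i, 1 ≤ i → i + 1 < k → ∀ P ∈ segment ℝ (v i) (v (i + 1)),
      P ∉ segment ℝ (v k) (v 0) := by
    intro i h1 h2 P hP hP'
    rcases hc i (by omega) P hP hP' with rfl | rfl
    · exact h.start_notMem h1 (by omega) hP
    · exact h.end_notMem h2 hP
  refine ⟨fun i => ?_, fun i j hij hj hi => ?_⟩
  · refine Set.Subset.antisymm ?_ (Set.singleton_subset_iff.2
      ⟨right_mem_segment .., left_mem_segment ..⟩)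
    rintro P ⟨hP, hP'⟩
    rw [Set.mem_singleton_iff]
    change P = v ((i + 1 : Fin (k + 1)) : ℕ)
    rcases (show (i : ℕ) + 1 < k ∨ (i : ℕ) + 1 = k ∨ (i : ℕ) = k by omega) with hi | hi | hi
    · have e := e1 i (by omega)
      rw [c1 _ (by omega)] at hP hP'
      rw [e] at hP' ⊢
      exact h.adj i hi P hP hP'
    · have e := e1 i (by omega)
      rw [c1 _ (by omega)] at hP
      rw [c2 _ (by omega)] at hP'
      rw [e, hi]
      rcases hc i (by omega) P hP hP' with rfl | rfl
      · exact absurd hP (h.start_notMem (by omega) (by omega))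
      · rfl
    · have e := e2 i hi
      rw [c2 _ hi] at hP
      rw [c1 _ (by omega)] at hP'
      rw [e] at hP' ⊢
      rcases hc 0 (by omega) P hP' hP with rfl | rfl
      · rfl
      · exact absurd hP' (h.end_notMem (by omega))
  · have hij' : (i : ℕ) ≠ j := fun h => hij (Fin.ext h)
    have hj' : ∀ i j : Fin (k + 1), j ≠ i + 1 → (i : ℕ) < k → (j : ℕ) ≠ i + 1 :=
      fun i j h hi h' => h (Fin.ext (by rw [e1 i hi, h']))
    have hk' : ∀ i j : Fin (k + 1), j ≠ i + 1 → (i : ℕ) = k → (j : ℕ) ≠ 0 :=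
      fun i j h hi h' => h (Fin.ext (by rw [e2 i hi, h']))
    have := hj' i j hj
    have := hj' j i hi
    have := hk' i j hj
    have := hk' j i hi
    rw [Set.eq_empty_iff_forall_notMem]
    rintro P ⟨hP, hP'⟩
    rcases (show (i : ℕ) = k ∨ (j : ℕ) = k ∨ ((i : ℕ) < k ∧ (j : ℕ) < k) by omega) with
      h1 | h1 | ⟨h1, h2⟩
    · rw [c2 _ h1] at hP
      rw [c1 _ (by omega)] at hP'
      exact far j (by omega) (by omega) P hP' hP
    · rw [c2 _ h1] at hP'
      rw [c1 _ (by omega)] at hP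
      exact far i (by omega) (by omega) P hP hP'
    · rw [c1 _ h1] at hP
      rw [c1 _ h2] at hP'
      rcases lt_or_gt_of_ne hij' with h3 | h3
      · exact h.dis i j (by omega) h2 P hP hP'
      · exact h.dis j i (by omega) h1 P hP' hP

/-- A path that lies, except possibly for the point `c`, strictly to the right (`s = 1`) or
strictly to the left (`s = -1`) of `c` stays weakly below some line through `c`. -/
lemma NP.exists_slope {a z k T} (h : NP a z k T) (c : ℝ × ℝ) (s : ℝ)
    (hT : ∀ P ∈ T, P = c ∨ 0 < s * (P.1 - c.1)) :
    ∃ M : ℝ, 0 ≤ M ∧ ∀ P ∈ T, P.2 - c.2 ≤ M * (s * (P.1 - c.1)) := by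
  have pt : ∀ a : ℝ × ℝ, (a = c ∨ 0 < s * (a.1 - c.1)) →
      ∃ M : ℝ, 0 ≤ M ∧ a.2 - c.2 ≤ M * (s * (a.1 - c.1)) := by
    rintro a (rfl | ha)
    · exact ⟨0, le_rfl, by simp⟩
    · refine ⟨|a.2 - c.2| / (s * (a.1 - c.1)), by positivity, ?_⟩
      rw [div_mul_cancel₀ _ ha.ne']
      exact le_abs_self _
  have up : ∀ {P : ℝ × ℝ} {M M' : ℝ}, (P = c ∨ 0 < s * (P.1 - c.1)) → M ≤ M' →
      P.2 - c.2 ≤ M * (s * (P.1 - c.1)) → P.2 - c.2 ≤ M' * (s * (P.1 - c.1)) := by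
    intro P M M' hP hM h
    refine h.trans (mul_le_mul_of_nonneg_right hM ?_)
    rcases hP with rfl | hP
    · simp
    · exact hP.le
  induction h with
  | single a =>
    obtain ⟨M, hM, h⟩ := pt a (hT a rfl)
    refine ⟨M, hM, fun P hP => ?_⟩
    obtain rfl : P = a := hP
    exact h
  | @cons a b z k T hab hseg hN ih =>
    obtain ⟨M, hM, h⟩ := ih fun P hP => hT P (Or.inr hP)
    have hTa := hT a (Or.inl (left_mem_segment ..))
    obtain ⟨N, hN', h'⟩ := pt a hTa
    refine ⟨max M N, le_max_of_le_left hM, ?_⟩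
    have hb := up (hT b (Or.inr hN.left_mem)) (le_max_left M N) (h b hN.left_mem)
    have ha := up hTa (le_max_right M N) h'
    rintro P (hP | hP)
    · obtain ⟨t, h0, h1, hx, hy⟩ := seg_param hP
      have e1 := mul_le_mul_of_nonneg_left ha (sub_nonneg.2 h1)
      have e2 := mul_le_mul_of_nonneg_left hb h0
      rw [hx, hy]
      linarith
    · exact up (hT P (Or.inr hP)) (le_max_left M N) (h P hP)

/-- A path in a strip is closed by two edges through a sufficiently high apex. -/
lemma Strip.close {a z k S} (h : Strip a z k S) (haz : a.1 < z.1) :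
    ∃ v : Fin (k + 2) → ℝ × ℝ, IsNoncrossingCycle v ∧
      ∀ P ∈ S, ∃ i, P ∈ cycleEdge v i := by
  obtain ⟨T, hT, hS, hx⟩ := h
  have hk : 1 ≤ k := by
    cases hT with
    | single => exact absurd haz (lt_irrefl _)
    | cons => omega
  obtain ⟨M, hM, hMT⟩ := hT.exists_slope a 1 fun P hP => by
    rcases (hx P hP).1 with h | h
    · exact Or.inl h
    · right; linarith
  obtain ⟨N, hN, hNT⟩ := hT.exists_slope z (-1) fun P hP => by
    rcases (hx P hP).2 with h | h
    · exact Or.inl h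
    · right; linarith
  obtain ⟨w, hw⟩ : ∃ w, w = (z.1 - a.1) / 2 := ⟨_, rfl⟩
  obtain ⟨H, hHa, hHz⟩ : ∃ H, M * w < H - a.2 ∧ N * w < H - z.2 :=
    ⟨max (a.2 + M * w) (z.2 + N * w) + 1,
      by linarith [le_max_left (a.2 + M * w) (z.2 + N * w)],
      by linarith [le_max_right (a.2 + M * w) (z.2 + N * w)]⟩
  obtain ⟨A, hA1, hA2⟩ : ∃ A : ℝ × ℝ, A.1 = a.1 + w ∧ A.2 = H := ⟨(a.1 + w, H), rfl, rfl⟩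
  have hA1' : A.1 = z.1 - w := by linarith
  have hAa : a.1 < A.1 := by linarith
  have hAz : A.1 < z.1 := by linarith
  have ka : ∀ P ∈ segment ℝ A a, P ∈ T → P = a := by
    intro P hP hPT
    obtain ⟨t, h0, h1, h2, h3⟩ := seg_param hP
    have h4 := hMT P hPT
    rw [h2, h3, hA1, hA2] at h4
    have h5 : (1 - t) * (H - a.2 - M * w) ≤ 0 := by linarith
    have h6 : 1 - t ≤ 0 := nonpos_of_mul_nonpos_left h5 (by linarith)
    obtain rfl : t = 1 := by linarith
    ext
    · rw [h2]; ring
    · rw [h3]; ring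
  have kz : ∀ P ∈ segment ℝ A z, P ∈ T → P = z := by
    intro P hP hPT
    obtain ⟨t, h0, h1, h2, h3⟩ := seg_param hP
    have h4 := hNT P hPT
    rw [h2, h3, hA1', hA2] at h4
    have h5 : (1 - t) * (H - z.2 - N * w) ≤ 0 := by linarith
    have h6 : 1 - t ≤ 0 := nonpos_of_mul_nonpos_left h5 (by linarith)
    obtain rfl : t = 1 := by linarith
    ext
    · rw [h2]; ring
    · rw [h3]; ring
  have hT' := NP.cons (ne_of_x hAa).symm ka hT
  obtain ⟨v, hv0, hvk, hv, hcov, hsub⟩ := hT'.exists_isPath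
  refine ⟨fun i => v i, hv.isNoncrossingCycle (by omega) ?_, ?_⟩
  · intro i hi P hP hP'
    rw [hvk, hv0, segment_symm] at hP'
    rw [hvk, hv0]
    rcases hsub i hi hP with h | h
    · rw [segment_symm] at h
      exact Or.inl (adj_sorted hAa hAz.le h hP')
    · exact Or.inr (kz P hP' h)
  · intro P hP
    rcases hcov P (Or.inr (hS hP)) with rfl | ⟨i, hi, h⟩
    · exact ⟨Fin.last (k + 1), by simpa [cycleEdge, hvk] using left_mem_segment ..⟩
    · refine ⟨⟨i, by omega⟩, ?_⟩
      have : ((⟨i, by omega⟩ + 1 : Fin (k + 2)) : ℕ) = i + 1 := by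
        rw [Fin.val_add_one_of_lt (by rw [Fin.lt_def]; simpa using hi)]
      simpa only [cycleEdge, this] using h

/-! ### Sorting the points -/

lemma cycleEdge_map {m : ℕ} (v : Fin (m + 1) → ℝ × ℝ) (e : (ℝ × ℝ) ≃ₗ[ℝ] (ℝ × ℝ))
    (i : Fin (m + 1)) : cycleEdge (fun i => e (v i)) i = e '' cycleEdge v i :=
  (image_segment ℝ (e : (ℝ × ℝ) →ₗ[ℝ] (ℝ × ℝ)).toAffineMap _ _).symm

lemma IsNoncrossingCycle.map {m : ℕ} {v : Fin (m + 1) → ℝ × ℝ} (h : IsNoncrossingCycle v)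
    (e : (ℝ × ℝ) ≃ₗ[ℝ] (ℝ × ℝ)) : IsNoncrossingCycle (fun i => e (v i)) := by
  have hs := cycleEdge_map v e
  refine ⟨fun i => ?_, fun i j h1 h2 h3 => ?_⟩
  · rw [hs, hs, ← Set.image_inter e.injective, h.1, Set.image_singleton]
  · rw [hs, hs, ← Set.image_inter e.injective, h.2 i j h1 h2 h3, Set.image_empty]

/-- The horizontal shear `(x, y) ↦ (x + t y, y)`. -/
def shear (t : ℝ) : (ℝ × ℝ) ≃ₗ[ℝ] (ℝ × ℝ) where
  toFun p := (p.1 + t * p.2, p.2)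
  invFun p := (p.1 - t * p.2, p.2)
  map_add' p q := by ext <;> simp; ring
  map_smul' c p := by ext <;> simp; ring
  left_inv p := by ext <;> simp
  right_inv p := by ext <;> simp

lemma exists_shear (P : Finset (ℝ × ℝ)) :
    ∃ t : ℝ, ∀ p ∈ P, ∀ q ∈ P, (shear t p).1 = (shear t q).1 → p = q := by
  classical
  -- the slopes at which two of the points get equal abscissae
  obtain ⟨t, ht⟩ := Infinite.exists_notMem_finset
    ((P ×ˢ P).image fun x => -(x.1.1 - x.2.1) / (x.1.2 - x.2.2))
  refine ⟨t, fun p hp q hq h => ?_⟩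
  have h' : p.1 + t * p.2 = q.1 + t * q.2 := h
  by_cases hy : p.2 = q.2
  · rw [hy] at h'
    exact Prod.ext (by linarith) hy
  · refine absurd (Finset.mem_image.2 ⟨(p, q), Finset.mk_mem_product hp hq, ?_⟩) ht
    have : p.2 - q.2 ≠ 0 := sub_ne_zero.2 hy
    simp only
    rw [div_eq_iff this]
    linarith

lemma exists_sorted (P : Finset (ℝ × ℝ))
    (hP : ∀ p ∈ P, ∀ q ∈ P, p.1 = q.1 → p = q) :
    ∃ p : ℕ → ℝ × ℝ, (∀ i j, i < j → j < P.card → (p i).1 < (p j).1) ∧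
      ∀ q ∈ P, ∃ i < P.card, p i = q := by
  classical
  have hc : (P.image Prod.fst).card = P.card :=
    Finset.card_image_of_injOn fun p hp q hq => hP p hp q hq
  have hex : ∀ i : Fin P.card, ∃ q ∈ P, q.1 = (P.image Prod.fst).orderEmbOfFin hc i := fun i =>
    Finset.mem_image.1 (Finset.orderEmbOfFin_mem (P.image Prod.fst) hc i)
  choose f hf hf' using hex
  refine ⟨fun i => if h : i < P.card then f ⟨i, h⟩ else 0, fun i j hij hj => ?_, fun q hq => ?_⟩
  · simp only [dif_pos hj, dif_pos (hij.trans hj), hf']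
    exact (OrderEmbedding.lt_iff_lt _).2 hij
  · have : q.1 ∈ Set.range ((P.image Prod.fst).orderEmbOfFin hc) := by
      rw [Finset.range_orderEmbOfFin]
      exact Finset.mem_coe.2 (Finset.mem_image_of_mem _ hq)
    obtain ⟨i, hi⟩ := this
    exact ⟨i, i.2, by simpa using hP _ (hf i) _ hq (by rw [hf', hi])⟩

/-- Every set of `n` points in the plane admits a noncrossing covering cycle with at
most `⌈21n/22⌉ + 1` edges. -/
theorem covering_cycle_upper_bound (P : Finset (ℝ × ℝ)) :
    ∃ (m : ℕ) (v : Fin (m + 1) → ℝ × ℝ),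
      IsNoncrossingCycle v ∧
      (∀ p ∈ P, ∃ i : Fin (m + 1), p ∈ cycleEdge v i) ∧
      m + 1 ≤ ⌈(21 * (P.card : ℚ)) / 22⌉₊ + 1 := by
  classical
  rcases le_or_gt P.card 1 with hcard | hcard
  · -- a one-vertex cycle, whose single edge is degenerate
    obtain ⟨x, hx⟩ := Finset.card_le_one_iff_subset_singleton.1 hcard
    have he : ∀ i : Fin 1, cycleEdge (fun _ : Fin (0 + 1) => x) i = {x} := fun i => by
      simp [cycleEdge]
    refine ⟨0, fun _ => x, ⟨fun i => by rw [he, he, Set.inter_self], fun i j hij => ?_⟩,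
      fun p hp => ⟨0, ?_⟩, by omega⟩
    · exact absurd (Fin.ext (by omega)) hij
    · rw [he]; simpa using hx hp
  · obtain ⟨t, ht⟩ := exists_shear P
    have hc : (P.image (shear t)).card = P.card :=
      Finset.card_image_of_injective _ (shear t).injective
    obtain ⟨p, hp, hcov⟩ := exists_sorted (P.image (shear t)) (by
      intro a' ha' b' hb' h
      obtain ⟨a, ha, rfl⟩ := Finset.mem_image.1 ha'
      obtain ⟨b, hb, rfl⟩ := Finset.mem_image.1 hb'
      rw [ht a ha b hb h])
    rw [hc] at hp hcov
    have hS := sorted_strip (P.card - 1) p fun i j hij hj => hp i j hij (by omega)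
    obtain ⟨v, hv, hvS⟩ := hS.close (hp _ _ (by omega) (by omega))
    refine ⟨_, fun i => (shear t).symm (v i), hv.map (shear t).symm, fun q hq => ?_, ?_⟩
    · obtain ⟨i, hi, hpi⟩ := hcov _ (Finset.mem_image_of_mem _ hq)
      obtain ⟨j, hj⟩ := hvS _ ⟨i, ⟨by omega, by omega⟩, hpi⟩
      refine ⟨j, ?_⟩
      rw [cycleEdge_map v (shear t).symm]
      exact ⟨_, hj, (shear t).symm_apply_apply q⟩
    · have h1 : (21 * (P.card : ℚ)) / 22 ≤ ⌈(21 * (P.card : ℚ)) / 22⌉₊ := Nat.le_ceil _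
      have h2 : 21 * P.card ≤ 22 * ⌈(21 * (P.card : ℚ)) / 22⌉₊ := by
        rw [div_le_iff₀ (by norm_num)] at h1
        have : ((21 * P.card : ℕ) : ℚ) ≤ ((22 * ⌈(21 * (P.card : ℚ)) / 22⌉₊ : ℕ) : ℚ) := by
          push_cast; linarith
        exact_mod_cast this
      omega
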